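/- arXiv:1312.7729 — 2 statements merged into one kernel-verified Lean document; each statement's English description precedes it below -/
import Mathlib

section
/- For real q with 0<q<1, a positive integer r, a Dirichlet character χ of odd conductor d, a nonnegative integer n, and real numbers x and y, the addition formula E^{(r)}_{n,χ,q}(x+y) = Σ_{i=0}^{n} C(n,i) q^{x·i} E^{(r)}_{i,χ,q}(y) [x]_q^{n-i} holds, where C(n,i) is the binomial coefficient. -/
open scoped BigOperators

/-- The `q`-number `[x]_q = (1 - q^x)/(1 - q)` for real `q` and real `x`. -/
noncomputable def qNum (q x : ℝ) : ℝ := (1 - q ^ x) / (1 - q)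

/-- Generalized `q`-Euler polynomial of order `r` attached to a Dirichlet character `χ`:
`E^{(r)}_{n,χ,q}(x) = [2]_q^r Σ' (-q)^{m₁+⋯+m_r} (Π χ(mᵢ)) [m₁+⋯+m_r+x]_q^n`. -/
noncomputable def qEuler (r : ℕ) {d : ℕ} (χ : DirichletCharacter ℂ d) (q : ℝ)
    (n : ℕ) (x : ℝ) : ℂ :=
  ((qNum q 2 : ℝ) : ℂ) ^ r *
    ∑' m : Fin r → ℕ,
      ((-(q : ℂ)) ^ (∑ i, m i) * (∏ i, χ ((m i : ZMod d))) *
        ((qNum q ((∑ i, m i : ℕ) + x) : ℝ) : ℂ) ^ n)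

/-- Dirichlet-type multiple `q`-`l`-function
`l_{q,r}(s,x|χ) = [2]_q^r Σ' (-q)^{m₁+⋯+m_r} (Π χ(mᵢ)) [m₁+⋯+m_r+x]_q^{-s}`,
with principal complex powers of positive real bases. -/
noncomputable def qL (q : ℝ) (r : ℕ) {d : ℕ} (χ : DirichletCharacter ℂ d)
    (s : ℂ) (x : ℝ) : ℂ :=
  ((qNum q 2 : ℝ) : ℂ) ^ r *
    ∑' m : Fin r → ℕ,
      ((-(q : ℂ)) ^ (∑ i, m i) * (∏ i, χ ((m i : ZMod d))) *
        ((qNum q ((∑ i, m i : ℕ) + x) : ℝ) : ℂ) ^ (-s))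

/-- The `q`-power sum
`S^{(r)}_{n,i,q}(a|χ) = Σ_{j₁,…,j_r=0}^{a-1} (-1)^{j₁+⋯+j_r} (Π χ(j_l)) q^{(j₁+⋯+j_r)(n-i+1)} [j₁+⋯+j_r]_q^i`. -/
noncomputable def qS (r : ℕ) {d : ℕ} (χ : DirichletCharacter ℂ d)
    (n i : ℕ) (q : ℝ) (a : ℕ) : ℂ :=
  ∑ j ∈ Fintype.piFinset (fun _ : Fin r => Finset.range a),
    ((-1 : ℂ) ^ (∑ l, j l) * (∏ l, χ ((j l : ZMod d))) *
      (q : ℂ) ^ ((∑ l, j l) * (n - i + 1)) *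
      ((qNum q ((∑ l, j l : ℕ)) : ℝ) : ℂ) ^ i)

lemma summable_geom_pi (q : ℝ) (hq0 : 0 < q) (hq1 : q < 1) (r : ℕ) :
    Summable (fun m : Fin r → ℕ => q ^ (∑ i, m i)) := by
  induction r with
  | zero => exact Summable.of_finite
  | succ r ih =>
    rw [← (Fin.consEquiv (fun _ : Fin (r + 1) => ℕ)).summable_iff]
    have h := (summable_geometric_of_lt_one hq0.le hq1).mul_of_nonneg ih
      (fun _ => by positivity) (fun _ => by positivity)
    refine h.congr (fun p => ?_)
    simp [Fin.consEquiv, Fin.sum_univ_succ, pow_add]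

lemma summable_qEuler (q : ℝ) (hq0 : 0 < q) (hq1 : q < 1)
    (r : ℕ) (d : ℕ) (χ : DirichletCharacter ℂ d) (n : ℕ) (x : ℝ) :
    Summable (fun m : Fin r → ℕ =>
      ((-(q : ℂ)) ^ (∑ i, m i) * (∏ i, χ ((m i : ZMod d))) *
        ((qNum q ((∑ i, m i : ℕ) + x) : ℝ) : ℂ) ^ n)) := by
  refine Summable.of_norm_bounded
    ((summable_geom_pi q hq0 hq1 r).mul_right (((1 + q ^ x) / (1 - q)) ^ n)) (fun m => ?_)
  have h1 : ‖∏ i, χ ((m i : ZMod d))‖ ≤ 1 := by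
    rw [norm_prod]
    exact Finset.prod_le_one (fun _ _ => norm_nonneg _) (fun _ _ => χ.norm_le_one _)
  have hx : 0 < q ^ x := Real.rpow_pos_of_pos hq0 x
  have h2 : |qNum q ((∑ i, m i : ℕ) + x)| ≤ (1 + q ^ x) / (1 - q) := by
    unfold qNum
    rw [abs_div, abs_of_pos (sub_pos.2 hq1)]
    have : 0 < 1 - q := sub_pos.2 hq1
    gcongr
    have h3 : q ^ (((∑ i, m i : ℕ) : ℝ) + x) ≤ q ^ x :=
      Real.rpow_le_rpow_of_exponent_ge hq0 hq1.le (le_add_of_nonneg_left (Nat.cast_nonneg _))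
    have h4 : 0 < q ^ (((∑ i, m i : ℕ) : ℝ) + x) := Real.rpow_pos_of_pos hq0 _
    rw [abs_le]
    constructor <;> linarith
  rw [norm_mul, norm_mul, norm_pow, norm_pow, norm_neg, Complex.norm_real, Complex.norm_real,
    Real.norm_eq_abs, Real.norm_eq_abs, abs_of_pos hq0]
  have h5 : q ^ (∑ i, m i) * ‖∏ i, χ ((m i : ZMod d))‖ ≤ q ^ (∑ i, m i) :=
    mul_le_of_le_one_right (by positivity) h1
  gcongr

lemma qNum_add (q : ℝ) (hq0 : 0 < q) (x y : ℝ) :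
    qNum q (x + y) = q ^ x * qNum q y + qNum q x := by
  unfold qNum
  rw [Real.rpow_add hq0]
  ring

/-- Equation (9): addition formula for the generalized `q`-Euler polynomials. -/
theorem qEuler_add (q : ℝ) (hq0 : 0 < q) (hq1 : q < 1)
    (r : ℕ) (hr : 0 < r) (d : ℕ) (hd : Odd d) (χ : DirichletCharacter ℂ d)
    (n : ℕ) (x y : ℝ) :
    qEuler r χ q n (x + y) =
      ∑ i ∈ Finset.range (n + 1),
        ((n.choose i : ℂ) * ((q ^ (x * (i : ℝ)) : ℝ) : ℂ) * qEuler r χ q i y *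
          ((qNum q x : ℝ) : ℂ) ^ (n - i)) := by
  unfold qEuler
  have hterm : ∀ i ∈ Finset.range (n + 1), Summable (fun m : Fin r → ℕ =>
      ((n.choose i : ℂ) * ((q ^ (x * (i : ℝ)) : ℝ) : ℂ) * ((qNum q x : ℝ) : ℂ) ^ (n - i)) *
      ((-(q : ℂ)) ^ (∑ i, m i) * (∏ i, χ ((m i : ZMod d))) *
        ((qNum q ((∑ i, m i : ℕ) + y) : ℝ) : ℂ) ^ i)) :=
    fun i _ => (summable_qEuler q hq0 hq1 r d χ i y).mul_left _
  have key := Summable.tsum_finsetSum hterm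
  have hR : ∀ i ∈ Finset.range (n + 1), ((n.choose i : ℂ) * ((q ^ (x * (i : ℝ)) : ℝ) : ℂ) *
      (((qNum q 2 : ℝ) : ℂ) ^ r * ∑' m : Fin r → ℕ,
      ((-(q : ℂ)) ^ (∑ i, m i) * (∏ i, χ ((m i : ZMod d))) *
        ((qNum q ((∑ i, m i : ℕ) + y) : ℝ) : ℂ) ^ i)) * ((qNum q x : ℝ) : ℂ) ^ (n - i)) =
      ((qNum q 2 : ℝ) : ℂ) ^ r * ∑' m : Fin r → ℕ,
      ((n.choose i : ℂ) * ((q ^ (x * (i : ℝ)) : ℝ) : ℂ) * ((qNum q x : ℝ) : ℂ) ^ (n - i)) *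
      ((-(q : ℂ)) ^ (∑ i, m i) * (∏ i, χ ((m i : ZMod d))) *
        ((qNum q ((∑ i, m i : ℕ) + y) : ℝ) : ℂ) ^ i) := by
    intro i _
    rw [tsum_mul_left]
    ring
  rw [Finset.sum_congr rfl hR, ← Finset.mul_sum, ← key]
  congr 1
  refine tsum_congr (fun m => ?_)
  rw [show ((∑ i, m i : ℕ) : ℝ) + (x + y) = x + (((∑ i, m i : ℕ) : ℝ) + y) by ring,
    qNum_add q hq0, Complex.ofReal_add, Complex.ofReal_mul, add_pow, Finset.mul_sum]
  refine Finset.sum_congr rfl (fun i _ => ?_)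
  rw [Real.rpow_mul hq0.le, Real.rpow_natCast, mul_pow, Complex.ofReal_pow]
  ring
end

section
/- For odd positive integers a and b, real q with 0<q<1, real x>0, a complex number s, a positive integer r, a Dirichlet character χ of odd conductor d, and nonnegative integers j_1,...,j_r: (1/[2]_{q^a}^r) · l_{q^a,r}(s, bx + (b/a)(j_1+⋯+j_r) | χ) = [a]_q^s · Σ_{n_1,...,n_r=0}^∞ Σ_{i_1,...,i_r=0}^{db-1} (-1)^{Σ_l(i_l+n_l)} q^{a·Σ_l(i_l+b·d·n_l)} (Π_{l=1}^r χ(i_l)) · [ab(x + d·Σ_l n_l) + b·Σ_l j_l + a·Σ_l i_l]_q^{-s}, where all complex powers of positive reals are principal. -/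
open scoped BigOperators

theorem aux_summable (Q : ℝ) (h0 : 0 < Q) (h1 : Q < 1) (r : ℕ) :
    Summable (fun m : Fin r → ℕ => Q ^ (∑ i, m i)) := by
  induction r with
  | zero => exact (hasSum_fintype _).summable
  | succ n ih =>
    have hg := summable_geometric_of_lt_one h0.le h1
    have h := hg.mul_of_nonneg ih (fun _ => by positivity) (fun _ => by positivity)
    rw [← (Fin.consEquiv (fun _ : Fin (n+1) => ℕ)).summable_iff]
    refine h.congr ?_
    intro p
    simp [Fin.consEquiv, Fin.sum_univ_succ, pow_add]

theorem aux_qNum_pos (q x : ℝ) (h0 : 0 < q) (h1 : q < 1) (hx : 0 < x) : 0 < qNum q x := by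
  unfold qNum
  have := Real.rpow_lt_one h0.le h1 hx
  exact div_pos (by linarith) (by linarith)

theorem aux_bound (Q : ℝ) (h0 : 0 < Q) (h1 : Q < 1) (X : ℝ) (hX : 0 < X) (s : ℂ) :
    ∃ C : ℝ, ∀ N : ℕ, ‖((qNum Q (N + X) : ℝ) : ℂ) ^ (-s)‖ ≤ C := by
  have hy := aux_qNum_pos Q X h0 h1 hX
  obtain ⟨C, hC⟩ := (isCompact_Icc (a := qNum Q X) (b := 1 / (1 - Q))).exists_bound_of_continuousOn
    (f := fun t : ℝ => t ^ ((-s).re)) (by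
      intro t ht
      exact (Real.continuousAt_rpow_const _ _ (Or.inl (by linarith [ht.1]))).continuousWithinAt)
  refine ⟨C, fun N => ?_⟩
  have hp : 0 < qNum Q (N + X) := aux_qNum_pos Q _ h0 h1 (by positivity)
  rw [Complex.norm_cpow_eq_rpow_re_of_pos hp]
  refine (le_abs_self _).trans (hC _ ⟨?_, ?_⟩)
  · unfold qNum
    have : Q ^ ((N : ℝ) + X) ≤ Q ^ X :=
      Real.rpow_le_rpow_of_exponent_ge h0 h1.le (by linarith [Nat.cast_nonneg (α := ℝ) N])
    have : 0 < 1 - Q := by linarith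
    gcongr
  · unfold qNum
    have : 0 < Q ^ ((N : ℝ) + X) := by positivity
    have : 0 < 1 - Q := by linarith
    gcongr
    linarith

theorem aux_summable_main (Q : ℝ) (h0 : 0 < Q) (h1 : Q < 1) (X : ℝ) (hX : 0 < X) (s : ℂ)
    (r d : ℕ) (χ : DirichletCharacter ℂ d) :
    Summable (fun m : Fin r → ℕ => ((-(Q : ℂ)) ^ (∑ i, m i) * (∏ i, χ ((m i : ZMod d))) *
        ((qNum Q ((∑ i, m i : ℕ) + X) : ℝ) : ℂ) ^ (-s))) := by
  obtain ⟨C, hC⟩ := aux_bound Q h0 h1 X hX s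
  refine Summable.of_norm_bounded ((aux_summable Q h0 h1 r).mul_right C) ?_
  intro m
  have hχ : ‖∏ i, χ ((m i : ZMod d))‖ ≤ 1 := by
    rw [norm_prod]
    exact Finset.prod_le_one (fun _ _ => norm_nonneg _) (fun _ _ => χ.norm_le_one _)
  have hn : ‖(-(Q : ℂ)) ^ (∑ i, m i)‖ = Q ^ (∑ i, m i) := by
    rw [norm_pow, norm_neg, Complex.norm_real, Real.norm_of_nonneg h0.le]
  rw [norm_mul, norm_mul, hn]
  have hp : 0 < Q ^ (∑ i, m i) := by positivity
  have := hC (∑ i, m i)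
  exact mul_le_mul (mul_le_of_le_one_right hp.le hχ) this (norm_nonneg _) hp.le

theorem aux_tsum (r D : ℕ) (hD : 0 < D) (F : (Fin r → ℕ) → ℂ) (hF : Summable F) :
    ∑' m, F m = ∑' n : Fin r → ℕ, ∑ i ∈ Fintype.piFinset (fun _ : Fin r => Finset.range D),
      F (fun l => n l * D + i l) := by
  have : NeZero D := ⟨hD.ne'⟩
  let e : ((Fin r → ℕ) × (Fin r → Fin D)) ≃ (Fin r → ℕ) :=
    ((Equiv.piCongrRight (fun _ : Fin r => Nat.divModEquiv D)).trans
      (Equiv.arrowProdEquivProdArrow (Fin r) (fun _ => ℕ) (fun _ => Fin D))).symm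
  have he : ∀ p, e p = fun l => p.1 l * D + (p.2 l : ℕ) := by
    intro p
    funext l
    rfl
  have hs : Summable (fun p => F (e p)) := (e.summable_iff).2 hF
  rw [← e.tsum_eq F, hs.tsum_prod]
  refine tsum_congr fun n => ?_
  rw [tsum_fintype]
  refine Finset.sum_bij (fun (i : Fin r → Fin D) _ => fun l => (i l : ℕ)) ?_ ?_ ?_ ?_
  · intro i _
    simp
  · intro i _ k _ h
    funext l
    exact Fin.ext (congrFun h l)
  · intro i hi
    have hi' : ∀ l, i l < D := by simpa using hi
    exact ⟨fun l => ⟨i l, hi' l⟩, Finset.mem_univ _, rfl⟩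
  · intro i _
    rw [he]

theorem aux_qNum (q : ℝ) (h0 : 0 < q) (h1 : q < 1) (a : ℕ) (ha : 0 < a) (y : ℝ) :
    qNum q (a * y) = qNum q a * qNum (q ^ a) y := by
  unfold qNum
  have h2 : q ^ a < 1 := pow_lt_one₀ h0.le h1 ha.ne'
  rw [Real.rpow_mul h0.le, Real.rpow_natCast]
  have : 1 - q ≠ 0 := by linarith
  have : 1 - q ^ a ≠ 0 := by linarith
  field_simp

/-- Equation (6): distribution-type expansion of the multiple `q`-`l`-function. -/
theorem qL_distribution (a b : ℕ) (ha0 : 0 < a) (ha : Odd a) (hb0 : 0 < b) (hb : Odd b)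
    (q : ℝ) (hq0 : 0 < q) (hq1 : q < 1) (x : ℝ) (hx : 0 < x) (s : ℂ)
    (r : ℕ) (hr : 0 < r) (d : ℕ) (hd : Odd d) (χ : DirichletCharacter ℂ d)
    (j : Fin r → ℕ) :
    (1 / ((qNum (q ^ a) 2 : ℝ) : ℂ) ^ r) *
      qL (q ^ a) r χ s (b * x + ((b : ℝ) / a) * (∑ l, j l)) =
    ((qNum q a : ℝ) : ℂ) ^ s *
      ∑' m : Fin r → ℕ,
        ∑ i ∈ Fintype.piFinset (fun _ : Fin r => Finset.range (d * b)),
          ((-1 : ℂ) ^ (∑ l, (i l + m l)) * (q : ℂ) ^ (a * ∑ l, (i l + b * d * m l)) *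
            (∏ l, χ ((i l : ZMod d))) *
            ((qNum q ((a : ℝ) * b * (x + (d : ℝ) * ∑ l, m l) + (b : ℝ) * ∑ l, j l +
              (a : ℝ) * ∑ l, i l) : ℝ) : ℂ) ^ (-s)) := by
  have hd0 : 0 < d := hd.pos
  have hQ0 : 0 < q ^ a := by positivity
  have hQ1 : q ^ a < 1 := pow_lt_one₀ hq0.le hq1 ha0.ne'
  have haR : (0 : ℝ) < a := by exact_mod_cast ha0
  have hbR : (0 : ℝ) < b := by exact_mod_cast hb0
  have hX : 0 < b * x + ((b : ℝ) / a) * (∑ l, j l) := by positivity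
  have h2 : ((qNum (q ^ a) 2 : ℝ) : ℂ) ^ r ≠ 0 := by
    refine pow_ne_zero _ ?_
    exact_mod_cast (aux_qNum_pos _ 2 hQ0 hQ1 (by norm_num)).ne'
  unfold qL
  rw [← mul_assoc, one_div, inv_mul_cancel₀ h2, one_mul,
    aux_tsum r (d * b) (by positivity) _ (aux_summable_main _ hQ0 hQ1 _ hX s r d χ),
    ← tsum_mul_left]
  refine tsum_congr fun n => ?_
  rw [Finset.mul_sum]
  refine Finset.sum_congr rfl fun i _ => ?_
  have hA := aux_qNum_pos q a hq0 hq1 haR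
  have hχ : ∀ l, χ (((n l * (d * b) + i l : ℕ)) : ZMod d) = χ ((i l : ZMod d)) := by
    intro l
    congr 1
    push_cast
    simp
  have hE : (∑ l, (n l * (d * b) + i l)) = (∑ l, i l) + (d * b) * ∑ l, n l := by
    rw [Finset.sum_add_distrib, ← Finset.sum_mul]; ring
  have hE1 : (∑ l, (i l + n l)) = (∑ l, i l) + ∑ l, n l := Finset.sum_add_distrib
  have hE2 : (∑ l, (i l + b * d * n l)) = (∑ l, i l) + (d * b) * ∑ l, n l := by
    rw [Finset.sum_add_distrib, ← Finset.mul_sum]; ring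
  have hq : (-((q ^ a : ℝ) : ℂ)) ^ ((∑ l, i l) + (d * b) * ∑ l, n l) =
      (-1 : ℂ) ^ ((∑ l, i l) + ∑ l, n l) * (q : ℂ) ^ (a * ((∑ l, i l) + (d * b) * ∑ l, n l)) := by
    rw [neg_pow, Complex.ofReal_pow, ← pow_mul]
    congr 1
    rw [pow_add, pow_add, pow_mul, (hd.mul hb).neg_one_pow]
  have hY : 0 < (((∑ l, i l) + (d * b) * ∑ l, n l : ℕ) : ℝ)
      + (b * x + ((b : ℝ) / a) * (∑ l, j l)) := by positivity
  have hN := aux_qNum q hq0 hq1 a ha0 ((((∑ l, i l) + (d * b) * ∑ l, n l : ℕ) : ℝ)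
      + (b * x + ((b : ℝ) / a) * (∑ l, j l)))
  have hB := aux_qNum_pos _ _ hQ0 hQ1 hY
  have harg : (a : ℝ) * b * (x + (d : ℝ) * ∑ l, n l) + (b : ℝ) * ∑ l, j l + (a : ℝ) * ∑ l, i l
      = a * ((((∑ l, i l) + (d * b) * ∑ l, n l : ℕ) : ℝ)
      + (b * x + ((b : ℝ) / a) * (∑ l, j l))) := by
    push_cast
    field_simp
    ring
  simp only [hχ, hE, hE1, hE2]
  rw [hq, harg, hN, Complex.ofReal_mul, Complex.mul_cpow_ofReal_nonneg hA.le hB.le]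
  have hne : ((qNum q a : ℝ) : ℂ) ^ s ≠ 0 := by
    rw [Complex.cpow_ne_zero_iff]
    left
    exact_mod_cast hA.ne'
  have hinv : ((qNum q a : ℝ) : ℂ) ^ s * ((qNum q a : ℝ) : ℂ) ^ (-s) = 1 := by
    rw [Complex.cpow_neg, mul_inv_cancel₀ hne]
  generalize ((qNum q a : ℝ) : ℂ) ^ s = u at *
  generalize ((qNum q a : ℝ) : ℂ) ^ (-s) = v at *
  linear_combination (-((-1 : ℂ) ^ ((∑ l, i l) + ∑ l, n l) *
    (q : ℂ) ^ (a * ((∑ l, i l) + (d * b) * ∑ l, n l)) * (∏ l, χ ((i l : ZMod d))) *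
    ((qNum (q ^ a) ((((∑ l, i l) + (d * b) * ∑ l, n l : ℕ) : ℝ)
      + (b * x + ((b : ℝ) / a) * (∑ l, j l))) : ℝ) : ℂ) ^ (-s))) * hinv
end
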